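/- The function Ω_t extends continuously to [0,1] × [0,1] in (t,α) (in particular (G_P''(α)/G_t''(α))^{1/2} → 1 as α → 0⁺ or α → 1⁻, uniformly in t ∈ [0,1]), and there exists a constant C > 0 such that for every integer N ≥ 1, sup_{t∈[0,1], α∈[0,1]} |q_t^N(α) − Ω_t(α)| ≤ C·N^{−1/4}; in particular q_t^N(α) → Ω_t(α) as N → ∞, uniformly in (t,α). -/

import Mathlib

open Set Filter

noncomputable def GP : ℝ → ℝ := fun x => x * Real.log x + (1 - x) * Real.log (1 - x)

noncomputable def Gt (f0 f1 : ℝ → ℝ) (t : ℝ) : ℝ → ℝ :=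
  fun x => GP x + ((1 - t) * f0 x + t * f1 x)

noncomputable def Phase (G : ℝ → ℝ) (α : ℝ) : ℝ → ℝ :=
  fun x => (x - α) * deriv G x - (G x - G α)

noncomputable def Qnorm (G : ℝ → ℝ) (N : ℕ) (α : ℝ) : ℝ :=
  2 * Real.pi * ∫ x in (0:ℝ)..1, Real.exp (-(N : ℝ) * Phase G α x)

noncomputable def RPhase (G : ℝ → ℝ) (α : ℝ) : ℝ → ℝ :=
  fun y => (1 / α) * Phase G α (α * (1 + y))

noncomputable def Leg (G : ℝ → ℝ) (S : Set ℝ) : ℝ → ℝ :=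
  fun ρ => sSup ((fun x => x * ρ - G x) '' S)

noncomputable def QQ (G : ℝ → ℝ) (N : ℕ) (α : ℝ) : ℝ :=
  Qnorm G N α * Real.exp ((N : ℝ) * G α)

noncomputable def Omg (f0 f1 : ℝ → ℝ) (t α : ℝ) : ℝ :=
  if α = 0 ∨ α = 1 then 1
  else (iteratedDeriv 2 GP α / iteratedDeriv 2 (Gt f0 f1 t) α) ^ ((1:ℝ)/2)

/-!
Deform `GP` to `GP + f` along the path `s • f`, `0 ≤ s ≤ 1`. The `s`-derivative of the logarithm of
`∫ laplaceWeight N α (s • f)` is `-N` times the mean of `Phase f α` under that weight. Means are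
computed by integrating by parts with the coefficient `x * (1 - x)`, which kills the boundary terms
and turns the singular `GP''` into the bounded factor `hessianRatio`; this makes every estimate
uniform in `α` up to the endpoints. It bounds the mean of `|x - α| ^ k` by `O(N ^ (-k / 2))`, and
applied once more to the Taylor expansion of the phase it shows that the `s`-derivative is
`-(d/ds) log (hessianRatio (s • f) α) / 2 + O(N ^ (-1 / 2))`. Integrating over `s`, the quotient of
norming constants is `hessianRatio f α ^ (-1 / 2)` up to a factor `exp (O(N ^ (-1 / 2)))`.
-/

open MeasureTheory

section RealEstimates

lemma abs_sub_le_mul_exp_of_abs_log_sub_log_le {a b e : ℝ} (ha : 0 < a) (hb : 0 < b)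
    (h : |Real.log a - Real.log b| ≤ e) : |a - b| ≤ b * (e * Real.exp e) := by
  set d := Real.log a - Real.log b
  have hab : a = b * Real.exp d := by
    rw [Real.exp_sub, Real.exp_log ha, Real.exp_log hb, mul_div_cancel₀ _ hb.ne']
  have hexp : |Real.exp d - 1| ≤ |d| * Real.exp |d| := by
    rw [← Real.norm_eq_abs, ← Real.norm_eq_abs, ← Complex.norm_real, ← Complex.norm_real d]
    simpa using Complex.norm_exp_sub_sum_le_norm_mul_exp (d : ℂ) 1
  calc |a - b| = b * |Real.exp d - 1| := by
        rw [hab, ← mul_sub_one, abs_mul, abs_of_pos hb]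
    _ ≤ b * (|d| * Real.exp |d|) := by gcongr
    _ ≤ b * (e * Real.exp e) := by
        have := (abs_nonneg d).trans h
        gcongr

lemma mul_one_sub_nonneg {x : ℝ} (hx : x ∈ Icc (0 : ℝ) 1) : 0 ≤ x * (1 - x) :=
  mul_nonneg hx.1 (sub_nonneg.2 hx.2)

lemma abs_deriv_mul_one_sub_mul_le {x : ℝ} (hx : x ∈ Icc (0 : ℝ) 1) (a b : ℝ) :
    |(1 - 2 * x) * a + x * (1 - x) * b| ≤ |a| + |b| := by
  have hlin : |1 - 2 * x| ≤ 1 := abs_le.2 ⟨by linarith [hx.2], by linarith [hx.1]⟩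
  have hquad : |x * (1 - x)| ≤ 1 := by
    rw [abs_of_nonneg (mul_one_sub_nonneg hx)]
    nlinarith [sq_nonneg (x - 1 / 2)]
  calc |(1 - 2 * x) * a + x * (1 - x) * b| ≤ |1 - 2 * x| * |a| + |x * (1 - x)| * |b| := by
        simpa only [abs_mul] using abs_add_le ((1 - 2 * x) * a) (x * (1 - x) * b)
    _ ≤ 1 * |a| + 1 * |b| := by gcongr
    _ = |a| + |b| := by rw [one_mul, one_mul]

lemma integral_abs_mul_le_of_integral_sq_mul_le {a b r : ℝ} {h p : ℝ → ℝ} (hab : a ≤ b)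
    (hr : 0 < r) (hh : ContinuousOn h (Icc a b)) (hp : ContinuousOn p (Icc a b))
    (hp0 : ∀ x ∈ Icc a b, 0 ≤ p x)
    (hsq : ∫ x in a..b, h x ^ 2 * p x ≤ r ^ 2 * ∫ x in a..b, p x) :
    ∫ x in a..b, |h x| * p x ≤ r * ∫ x in a..b, p x := by
  have hsqi : IntervalIntegrable (fun x => h x ^ 2 * p x) volume a b :=
    ((hh.pow 2).mul hp).intervalIntegrable_of_Icc hab
  have hpi : IntervalIntegrable p volume a b := hp.intervalIntegrable_of_Icc hab
  have hle : ∀ x ∈ Icc a b, |h x| * p x ≤ (2 * r)⁻¹ * (h x ^ 2 * p x) + r / 2 * p x := by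
    intro x hx
    have amgm : |h x| ≤ (2 * r)⁻¹ * h x ^ 2 + r / 2 := by
      rw [← sq_abs, ← sub_nonneg]
      have : 0 ≤ (2 * r)⁻¹ * (|h x| - r) ^ 2 := by positivity
      convert this using 1
      field_simp
      ring
    nlinarith [mul_le_mul_of_nonneg_right amgm (hp0 x hx)]
  calc ∫ x in a..b, |h x| * p x
      ≤ ∫ x in a..b, ((2 * r)⁻¹ * (h x ^ 2 * p x) + r / 2 * p x) :=
        intervalIntegral.integral_mono_on hab ((hh.abs.mul hp).intervalIntegrable_of_Icc hab)
          ((hsqi.const_mul _).add (hpi.const_mul _)) hle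
    _ = (2 * r)⁻¹ * (∫ x in a..b, h x ^ 2 * p x) + r / 2 * ∫ x in a..b, p x := by
        rw [intervalIntegral.integral_add (hsqi.const_mul _) (hpi.const_mul _),
          intervalIntegral.integral_const_mul, intervalIntegral.integral_const_mul]
    _ ≤ (2 * r)⁻¹ * (r ^ 2 * ∫ x in a..b, p x) + r / 2 * ∫ x in a..b, p x := by gcongr
    _ = r * ∫ x in a..b, p x := by field_simp; ring

lemma hasDerivAt_integral_mul_exp {W h : ℝ → ℝ} (hW : Continuous W) (hh : Continuous h)
    (a b s : ℝ) :
    HasDerivAt (fun s => ∫ x in a..b, W x * Real.exp (s * h x))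
      (∫ x in a..b, h x * (W x * Real.exp (s * h x))) s := by
  have hcont : Continuous fun q : ℝ × ℝ => h q.2 * (W q.2 * Real.exp (q.1 * h q.2)) := by fun_prop
  obtain ⟨C, hC⟩ := ((isCompact_closedBall s 1).prod
    (isCompact_uIcc (a := a) (b := b))).exists_bound_of_continuousOn hcont.continuousOn
  refine (intervalIntegral.hasDerivAt_integral_of_dominated_loc_of_deriv_le
    (F := fun s x => W x * Real.exp (s * h x))
    (F' := fun s x => h x * (W x * Real.exp (s * h x))) (bound := fun _ => C)
    (Metric.ball_mem_nhds s one_pos)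
    (Eventually.of_forall fun s => Continuous.aestronglyMeasurable (by fun_prop))
    (Continuous.intervalIntegrable (by fun_prop) _ _)
    (Continuous.aestronglyMeasurable (by fun_prop))
    (Eventually.of_forall fun x hx r hr =>
      hC (r, x) ⟨Metric.ball_subset_closedBall hr, uIoc_subset_uIcc hx⟩)
    intervalIntegrable_const
    (Eventually.of_forall fun x _ r _ => ?_)).2
  exact ((((hasDerivAt_id r).mul_const (h x)).exp).const_mul (W x)).congr_deriv
    (by simp only [id]; ring)

lemma hasDerivAt_iteratedDeriv {m : WithTop ℕ∞} {n : ℕ} {f : ℝ → ℝ} (hf : ContDiff ℝ m f)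
    (hn : (n : WithTop ℕ∞) < m) (x : ℝ) :
    HasDerivAt (iteratedDeriv n f) (iteratedDeriv (n + 1) f x) x := by
  rw [iteratedDeriv_succ]
  exact (hf.differentiable_iteratedDeriv n hn x).hasDerivAt

lemma iteratedDeriv_linearCombination {n : ℕ} {f g : ℝ → ℝ} (hf : ContDiff ℝ n f)
    (hg : ContDiff ℝ n g) (a b x : ℝ) :
    iteratedDeriv n (a • f + b • g) x = a * iteratedDeriv n f x + b * iteratedDeriv n g x := by
  rw [iteratedDeriv_add (f := a • f) (g := b • g) (hf.const_smul a).contDiffAt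
    (hg.const_smul b).contDiffAt, iteratedDeriv_const_smul_field, iteratedDeriv_const_smul_field]
  rfl

end RealEstimates

section Phase

variable {B α x : ℝ} {f : ℝ → ℝ}

lemma phase_self (G : ℝ → ℝ) (α : ℝ) : Phase G α α = 0 := by simp [Phase]

lemma phase_smul (s : ℝ) (f : ℝ → ℝ) (α x : ℝ) : Phase (s • f) α x = s * Phase f α x := by
  simp only [Phase, deriv_const_smul_field, Pi.smul_apply, smul_eq_mul]
  ring

lemma hasDerivAt_phase (hf : ContDiff ℝ 2 f) (α x : ℝ) :
    HasDerivAt (Phase f α) ((x - α) * iteratedDeriv 2 f x) x := by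
  have hf0 : HasDerivAt f (deriv f x) x := by
    simpa using hasDerivAt_iteratedDeriv (n := 0) hf (by norm_num) x
  have hf1 : HasDerivAt (deriv f) (iteratedDeriv 2 f x) x := by
    simpa using hasDerivAt_iteratedDeriv (n := 1) hf (by norm_num) x
  exact ((((hasDerivAt_id x).sub_const α).mul hf1).sub (hf0.sub_const (f α))).congr_deriv
    (by simp only [id]; ring)

lemma continuous_phase (hf : ContDiff ℝ 1 f) (α : ℝ) : Continuous (Phase f α) := by
  have := hf.continuous
  have := hf.continuous_deriv le_rfl
  unfold Phase
  fun_prop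

/-- Third-order control of a perturbation of the potential: `f` is `C³`, and its second and third
derivatives are bounded by `B` on `[0, 1]`. -/
structure HasDerivBounds (B : ℝ) (f : ℝ → ℝ) : Prop where
  contDiff : ContDiff ℝ 3 f
  abs_iteratedDeriv_two_le : ∀ x ∈ Icc (0 : ℝ) 1, |iteratedDeriv 2 f x| ≤ B
  abs_iteratedDeriv_three_le : ∀ x ∈ Icc (0 : ℝ) 1, |iteratedDeriv 3 f x| ≤ B

lemma HasDerivBounds.contDiff_two (hf : HasDerivBounds B f) : ContDiff ℝ 2 f :=
  hf.contDiff.of_le (by norm_num)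

lemma HasDerivBounds.hasDerivAt_iteratedDeriv_two (hf : HasDerivBounds B f) (x : ℝ) :
    HasDerivAt (iteratedDeriv 2 f) (iteratedDeriv 3 f x) x :=
  hasDerivAt_iteratedDeriv hf.contDiff (by norm_num) x

lemma HasDerivBounds.abs_phase_sub_le (hf : HasDerivBounds B f) (hα : α ∈ Icc (0 : ℝ) 1)
    (hx : x ∈ Icc (0 : ℝ) 1) :
    |Phase f α x - (x - α) ^ 2 * iteratedDeriv 2 f x / 2| ≤ B / 2 * |x - α| ^ 3 := by
  have hderiv : ∀ y ∈ uIcc α x, HasDerivWithinAt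
      (fun y => Phase f α y - (y - α) ^ 2 * iteratedDeriv 2 f y / 2)
      (-((y - α) ^ 2 * iteratedDeriv 3 f y / 2)) (uIcc α x) y := fun y _ =>
    ((hasDerivAt_phase hf.contDiff_two α y).sub
      (((((hasDerivAt_id y).sub_const α).pow 2).mul
        (hf.hasDerivAt_iteratedDeriv_two y)).div_const 2)).hasDerivWithinAt.congr_deriv
      (by simp; ring)
  have hbound : ∀ y ∈ uIcc α x,
      ‖-((y - α) ^ 2 * iteratedDeriv 3 f y / 2)‖ ≤ B / 2 * |x - α| ^ 2 := by
    intro y hy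
    have hdist : |y - α| ≤ |x - α| := abs_sub_left_of_mem_uIcc hy
    have hthird := hf.abs_iteratedDeriv_three_le y (uIcc_subset_Icc hα hx hy)
    calc ‖-((y - α) ^ 2 * iteratedDeriv 3 f y / 2)‖
        = |y - α| ^ 2 * |iteratedDeriv 3 f y| / 2 := by
          rw [norm_neg, Real.norm_eq_abs, abs_div, abs_mul, abs_pow, abs_two]
      _ ≤ |x - α| ^ 2 * B / 2 := by gcongr
      _ = B / 2 * |x - α| ^ 2 := by ring
  have hmvt := (convex_uIcc α x).norm_image_sub_le_of_norm_hasDerivWithin_le hderiv hbound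
    left_mem_uIcc right_mem_uIcc
  simpa [phase_self, mul_assoc, ← pow_succ, -sq_abs] using hmvt

end Phase

section HessianRatio

variable {c B x : ℝ} {f g : ℝ → ℝ}

/-- The ratio `(GP + f)'' / GP''` of second derivatives, extended continuously from `(0, 1)` to the
line by means of `GP'' x = 1 / (x * (1 - x))`. It equals `1` at the endpoints `0` and `1`. -/
noncomputable def hessianRatio (f : ℝ → ℝ) (x : ℝ) : ℝ := 1 + x * (1 - x) * iteratedDeriv 2 f x

lemma continuous_hessianRatio (hf : ContDiff ℝ 2 f) : Continuous (hessianRatio f) := by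
  have := hf.continuous_iteratedDeriv 2 le_rfl
  unfold hessianRatio
  fun_prop

lemma hessianRatio_linearCombination (hf : ContDiff ℝ 2 f) (hg : ContDiff ℝ 2 g) {a b : ℝ}
    (hab : a + b = 1) (x : ℝ) :
    hessianRatio (a • f + b • g) x = a * hessianRatio f x + b * hessianRatio g x := by
  simp only [hessianRatio, iteratedDeriv_linearCombination hf hg]
  linear_combination -hab

lemma hessianRatio_smul (s : ℝ) (f : ℝ → ℝ) (x : ℝ) :
    hessianRatio (s • f) x = 1 + s * (x * (1 - x) * iteratedDeriv 2 f x) := by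
  simp only [hessianRatio, iteratedDeriv_const_smul_field, smul_eq_mul]
  ring

lemma HasDerivBounds.hasDerivAt_hessianRatio (hf : HasDerivBounds B f) (x : ℝ) :
    HasDerivAt (hessianRatio f)
      ((1 - 2 * x) * iteratedDeriv 2 f x + x * (1 - x) * iteratedDeriv 3 f x) x :=
  (((((hasDerivAt_id x).mul ((hasDerivAt_id x).const_sub 1)).mul
    (hf.hasDerivAt_iteratedDeriv_two x))).const_add 1).congr_deriv
    (by simp only [Pi.mul_apply, id]; ring)

/-- The perturbations `f` over which the estimates below are uniform: `f` has second and third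
derivatives bounded by `B`, and the convexity of `GP + f` is quantified by
`c ≤ (GP + f)'' / GP''`. -/
structure IsAdmissible (c B : ℝ) (f : ℝ → ℝ) : Prop extends HasDerivBounds B f where
  le_hessianRatio : ∀ x ∈ Icc (0 : ℝ) 1, c ≤ hessianRatio f x

lemma IsAdmissible.mono {c' B' : ℝ} (hf : IsAdmissible c B f) (hc : c' ≤ c) (hB : B ≤ B') :
    IsAdmissible c' B' f where
  contDiff := hf.contDiff
  abs_iteratedDeriv_two_le x hx := (hf.abs_iteratedDeriv_two_le x hx).trans hB
  abs_iteratedDeriv_three_le x hx := (hf.abs_iteratedDeriv_three_le x hx).trans hB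
  le_hessianRatio x hx := hc.trans (hf.le_hessianRatio x hx)

lemma isAdmissible_zero (hc : c ≤ 1) (hB : 0 ≤ B) : IsAdmissible c B 0 where
  contDiff := contDiff_const
  abs_iteratedDeriv_two_le _ _ := by simpa using hB
  abs_iteratedDeriv_three_le _ _ := by simpa using hB
  le_hessianRatio _ _ := by simpa [hessianRatio] using hc

lemma convex_setOf_isAdmissible (c B : ℝ) : Convex ℝ {f | IsAdmissible c B f} := by
  intro f hf g hg a b ha hb hab
  have habs : ∀ {u v : ℝ}, |u| ≤ B → |v| ≤ B → |a * u + b * v| ≤ B := by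
    intro u v hu hv
    simpa using convex_closedBall (0 : ℝ) B (by simpa using hu) (by simpa using hv) ha hb hab
  refine ⟨⟨(hf.contDiff.const_smul a).add (hg.contDiff.const_smul b), fun x hx => ?_,
    fun x hx => ?_⟩, fun x hx => ?_⟩
  · rw [iteratedDeriv_linearCombination hf.contDiff_two hg.contDiff_two]
    exact habs (hf.abs_iteratedDeriv_two_le x hx) (hg.abs_iteratedDeriv_two_le x hx)
  · rw [iteratedDeriv_linearCombination hf.contDiff hg.contDiff]
    exact habs (hf.abs_iteratedDeriv_three_le x hx) (hg.abs_iteratedDeriv_three_le x hx)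
  · rw [hessianRatio_linearCombination hf.contDiff_two hg.contDiff_two hab]
    exact convex_Ici c (hf.le_hessianRatio x hx) (hg.le_hessianRatio x hx) ha hb hab

lemma IsAdmissible.smul (hf : IsAdmissible c B f) (hc : c ≤ 1) {s : ℝ}
    (hs : s ∈ Icc (0 : ℝ) 1) : IsAdmissible c B (s • f) := by
  have hB : 0 ≤ B :=
    (abs_nonneg _).trans (hf.abs_iteratedDeriv_two_le 0 (left_mem_Icc.2 zero_le_one))
  exact (convex_setOf_isAdmissible c B).smul_mem_of_zero_mem (isAdmissible_zero hc hB) hf hs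

lemma exists_isAdmissible (hf : ContDiff ℝ 3 f)
    (hpos : ∀ x ∈ Ioo (0 : ℝ) 1, 0 < hessianRatio f x) : ∃ c > 0, ∃ B, IsAdmissible c B f := by
  have hf2 : ContDiff ℝ 2 f := hf.of_le (by norm_num)
  obtain ⟨x₀, hx₀, hmin⟩ := isCompact_Icc.exists_isMinOn (nonempty_Icc.2 (zero_le_one' ℝ))
    (continuous_hessianRatio hf2).continuousOn
  have hpos₀ : 0 < hessianRatio f x₀ := by
    rcases eq_endpoints_or_mem_Ioo_of_mem_Icc hx₀ with rfl | rfl | hx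
    · simp [hessianRatio]
    · simp [hessianRatio]
    · exact hpos x₀ hx
  obtain ⟨B₂, hB₂⟩ := isCompact_Icc.exists_bound_of_continuousOn (s := Icc (0 : ℝ) 1)
    (hf.continuous_iteratedDeriv 2 (by norm_num)).continuousOn
  obtain ⟨B₃, hB₃⟩ := isCompact_Icc.exists_bound_of_continuousOn (s := Icc (0 : ℝ) 1)
    (hf.continuous_iteratedDeriv 3 (by norm_num)).continuousOn
  exact ⟨_, hpos₀, max B₂ B₃, ⟨hf, fun x hx => (hB₂ x hx).trans (le_max_left _ _),
    fun x hx => (hB₃ x hx).trans (le_max_right _ _)⟩, fun _ hx => hmin hx⟩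

end HessianRatio

section Weight

variable {N α x : ℝ} {f : ℝ → ℝ}

/-- The Laplace weight `exp (-N * (Phase (GP + f) α x - GP α))`, rewritten so that it is
continuous up to the endpoints of `[0, 1]`, where the derivative of `GP` blows up. -/
noncomputable def laplaceWeight (N α : ℝ) (f : ℝ → ℝ) (x : ℝ) : ℝ :=
  x ^ (N * α) * (1 - x) ^ (N * (1 - α)) * Real.exp (-N * Phase f α x)

lemma continuous_laplaceWeight (hN : 0 ≤ N) (hα : α ∈ Icc (0 : ℝ) 1) (hf : ContDiff ℝ 1 f) :
    Continuous (laplaceWeight N α f) := by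
  have hphase := continuous_phase hf α
  have hleft : Continuous fun x : ℝ => x ^ (N * α) :=
    Real.continuous_rpow_const (mul_nonneg hN hα.1)
  have hright : Continuous fun x : ℝ => (1 - x) ^ (N * (1 - α)) :=
    (Real.continuous_rpow_const (mul_nonneg hN (sub_nonneg.2 hα.2))).comp (continuous_sub_left 1)
  unfold laplaceWeight
  fun_prop

lemma laplaceWeight_nonneg (N α : ℝ) (f : ℝ → ℝ) (hx : x ∈ Icc (0 : ℝ) 1) :
    0 ≤ laplaceWeight N α f x :=
  mul_nonneg (mul_nonneg (Real.rpow_nonneg hx.1 _) (Real.rpow_nonneg (sub_nonneg.2 hx.2) _))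
    (Real.exp_pos _).le

lemma laplaceWeight_pos (N α : ℝ) (f : ℝ → ℝ) (hx : x ∈ Ioo (0 : ℝ) 1) :
    0 < laplaceWeight N α f x :=
  mul_pos (mul_pos (Real.rpow_pos_of_pos hx.1 _) (Real.rpow_pos_of_pos (sub_pos.2 hx.2) _))
    (Real.exp_pos _)

lemma laplaceWeight_smul (N α s : ℝ) (f : ℝ → ℝ) (x : ℝ) :
    laplaceWeight N α (s • f) x = laplaceWeight N α 0 x * Real.exp (s * (-N * Phase f α x)) := by
  have hzero : Phase 0 α x = 0 := by simp [Phase]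
  rw [laplaceWeight, laplaceWeight, phase_smul, hzero, mul_zero, Real.exp_zero, mul_one]
  ring_nf

lemma hasDerivAt_laplaceWeight (N α : ℝ) (hf : ContDiff ℝ 2 f) (hx : x ∈ Ioo (0 : ℝ) 1) :
    HasDerivAt (laplaceWeight N α f)
      (-(N * (x - α) * hessianRatio f x / (x * (1 - x))) * laplaceWeight N α f x) x := by
  have hx0 : x ≠ 0 := hx.1.ne'
  have hx1 : 1 - x ≠ 0 := (sub_pos.2 hx.2).ne'
  have hleft : HasDerivAt (fun x : ℝ => x ^ (N * α)) (N * α * x ^ (N * α - 1)) x :=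
    Real.hasDerivAt_rpow_const (Or.inl hx0)
  have hright : HasDerivAt (fun x : ℝ => (1 - x) ^ (N * (1 - α)))
      (-1 * (N * (1 - α)) * (1 - x) ^ (N * (1 - α) - 1)) x :=
    ((hasDerivAt_id x).const_sub 1).rpow_const (Or.inl hx1)
  refine ((hleft.mul hright).mul (((hasDerivAt_phase hf α x).const_mul (-N)).exp)).congr_deriv ?_
  rw [Real.rpow_sub_one hx0, Real.rpow_sub_one hx1]
  simp only [laplaceWeight, hessianRatio, Pi.mul_apply]
  field_simp
  ring

lemma integral_laplaceWeight_pos (hN : 0 ≤ N) (hα : α ∈ Icc (0 : ℝ) 1) (hf : ContDiff ℝ 1 f) :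
    0 < ∫ x in (0 : ℝ)..1, laplaceWeight N α f x :=
  intervalIntegral.intervalIntegral_pos_of_pos_on
    ((continuous_laplaceWeight hN hα hf).intervalIntegrable _ _)
    (fun _ hx => laplaceWeight_pos N α f hx) zero_lt_one

lemma intervalIntegrable_mul_laplaceWeight (hN : 0 ≤ N) (hα : α ∈ Icc (0 : ℝ) 1)
    (hf : ContDiff ℝ 1 f) {φ : ℝ → ℝ} (hφ : ContinuousOn φ (Icc 0 1)) :
    IntervalIntegrable (fun x => φ x * laplaceWeight N α f x) volume 0 1 :=
  (hφ.mul (continuous_laplaceWeight hN hα hf).continuousOn).intervalIntegrable_of_Icc zero_le_one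

lemma integral_mul_laplaceWeight_mono (hN : 0 ≤ N) (hα : α ∈ Icc (0 : ℝ) 1) (hf : ContDiff ℝ 1 f)
    {φ ψ : ℝ → ℝ} (hφ : ContinuousOn φ (Icc 0 1)) (hψ : ContinuousOn ψ (Icc 0 1))
    (hle : ∀ x ∈ Icc (0 : ℝ) 1, φ x ≤ ψ x) :
    ∫ x in (0 : ℝ)..1, φ x * laplaceWeight N α f x ≤
      ∫ x in (0 : ℝ)..1, ψ x * laplaceWeight N α f x :=
  intervalIntegral.integral_mono_on zero_le_one
    (intervalIntegrable_mul_laplaceWeight hN hα hf hφ)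
    (intervalIntegrable_mul_laplaceWeight hN hα hf hψ)
    fun x hx => mul_le_mul_of_nonneg_right (hle x hx) (laplaceWeight_nonneg N α f hx)

lemma abs_integral_mul_laplaceWeight_le (hN : 0 ≤ N) (hα : α ∈ Icc (0 : ℝ) 1)
    (hf : ContDiff ℝ 1 f) {φ ψ : ℝ → ℝ} (hψ : ContinuousOn ψ (Icc 0 1))
    (hle : ∀ x ∈ Icc (0 : ℝ) 1, |φ x| ≤ ψ x) :
    |∫ x in (0 : ℝ)..1, φ x * laplaceWeight N α f x| ≤
      ∫ x in (0 : ℝ)..1, ψ x * laplaceWeight N α f x := by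
  rw [← Real.norm_eq_abs]
  refine intervalIntegral.norm_integral_le_of_norm_le zero_le_one (Eventually.of_forall ?_)
    (intervalIntegrable_mul_laplaceWeight hN hα hf hψ)
  intro x hx
  have hx' := Ioc_subset_Icc_self hx
  rw [norm_mul, Real.norm_of_nonneg (laplaceWeight_nonneg N α f hx')]
  exact mul_le_mul_of_nonneg_right (hle x hx') (laplaceWeight_nonneg N α f hx')

lemma integral_deriv_mul_laplaceWeight (hN : 0 ≤ N) (hα : α ∈ Icc (0 : ℝ) 1)
    (hf : ContDiff ℝ 2 f) {y y' : ℝ → ℝ} (hy : ∀ x ∈ Icc (0 : ℝ) 1, HasDerivAt y (y' x) x)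
    (hy' : ContinuousOn y' (Icc 0 1)) :
    ∫ x in (0 : ℝ)..1, ((1 - 2 * x) * y x + x * (1 - x) * y' x) * laplaceWeight N α f x =
      N * ∫ x in (0 : ℝ)..1, (x - α) * hessianRatio f x * y x * laplaceWeight N α f x := by
  have hf1 : ContDiff ℝ 1 f := hf.of_le (by norm_num)
  have hyc : ContinuousOn y (Icc 0 1) := fun x hx => (hy x hx).continuousAt.continuousWithinAt
  have hr := (continuous_hessianRatio hf).continuousOn (s := Icc 0 1)
  have hleft := intervalIntegrable_mul_laplaceWeight hN hα hf1
    (φ := fun x => (1 - 2 * x) * y x + x * (1 - x) * y' x) (by fun_prop)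
  have hright := (intervalIntegrable_mul_laplaceWeight hN hα hf1
    (φ := fun x => (x - α) * hessianRatio f x * y x) (by fun_prop)).const_mul N
  have hcont : ContinuousOn (fun x => x * (1 - x) * y x * laplaceWeight N α f x) (Icc 0 1) := by
    have := (continuous_laplaceWeight hN hα hf1).continuousOn (s := Icc 0 1)
    fun_prop
  have hderiv : ∀ x ∈ Ioo (0 : ℝ) 1, HasDerivAt
      (fun x => x * (1 - x) * y x * laplaceWeight N α f x)
      (((1 - 2 * x) * y x + x * (1 - x) * y' x) * laplaceWeight N α f x -
        N * ((x - α) * hessianRatio f x * y x * laplaceWeight N α f x)) x := by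
    intro x hx
    have hx0 : x ≠ 0 := hx.1.ne'
    have hx1 : 1 - x ≠ 0 := (sub_pos.2 hx.2).ne'
    refine ((((hasDerivAt_id x).mul ((hasDerivAt_id x).const_sub 1)).mul
      (hy x (Ioo_subset_Icc_self hx))).mul (hasDerivAt_laplaceWeight N α hf hx)).congr_deriv ?_
    simp only [Pi.mul_apply, id]
    field_simp
    ring
  have hftc := intervalIntegral.integral_eq_sub_of_hasDerivAt_of_le zero_le_one hcont hderiv
    (hleft.sub hright)
  rw [intervalIntegral.integral_sub hleft hright, intervalIntegral.integral_const_mul] at hftc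
  simp only [sub_self, mul_zero, zero_mul] at hftc
  exact sub_eq_zero.1 hftc

end Weight

section Moments

variable {c N α : ℝ} {f : ℝ → ℝ}

lemma one_sub_two_mul_mul_sub_le (hα : α ∈ Icc (0 : ℝ) 1) (x : ℝ) :
    (1 - 2 * x) * (x - α) ≤ 1 / 4 := by
  rcases le_total x (1 / 2) with h | h
  · nlinarith [sq_nonneg (x - 1 / 4), mul_nonneg (sub_nonneg.2 h) hα.1]
  · nlinarith [sq_nonneg (x - 3 / 4), mul_nonneg (sub_nonneg.2 h) (sub_nonneg.2 hα.2)]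

lemma mul_integral_even_pow_succ_mul_laplaceWeight_le (hN : 0 ≤ N) (hα : α ∈ Icc (0 : ℝ) 1)
    (hf : ContDiff ℝ 2 f) (hc : ∀ x ∈ Icc (0 : ℝ) 1, c ≤ hessianRatio f x) (k : ℕ) :
    N * c * ∫ x in (0 : ℝ)..1, (x - α) ^ (2 * (k + 1)) * laplaceWeight N α f x ≤
      (k + 1) / 2 * ∫ x in (0 : ℝ)..1, (x - α) ^ (2 * k) * laplaceWeight N α f x := by
  have hf1 : ContDiff ℝ 1 f := hf.of_le (by norm_num)
  have hr := (continuous_hessianRatio hf).continuousOn (s := Icc 0 1)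
  have hstein := integral_deriv_mul_laplaceWeight hN hα hf (y := fun x => (x - α) ^ (2 * k + 1))
    (y' := fun x => (2 * k + 1) * (x - α) ^ (2 * k))
    (fun x _ => (((hasDerivAt_id x).sub_const α).pow (2 * k + 1)).congr_deriv (by simp))
    (by fun_prop)
  have hlower : ∀ x ∈ Icc (0 : ℝ) 1, c * (x - α) ^ (2 * (k + 1)) ≤
      (x - α) * hessianRatio f x * (x - α) ^ (2 * k + 1) := by
    intro x hx
    calc c * (x - α) ^ (2 * (k + 1)) ≤ hessianRatio f x * (x - α) ^ (2 * (k + 1)) :=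
          mul_le_mul_of_nonneg_right (hc x hx) ((even_two_mul _).pow_nonneg _)
      _ = (x - α) * hessianRatio f x * (x - α) ^ (2 * k + 1) := by ring
  have hupper : ∀ x ∈ Icc (0 : ℝ) 1,
      (1 - 2 * x) * (x - α) ^ (2 * k + 1) + x * (1 - x) * ((2 * k + 1) * (x - α) ^ (2 * k)) ≤
        (k + 1) / 2 * (x - α) ^ (2 * k) := by
    intro x _
    have hlin := one_sub_two_mul_mul_sub_le hα x
    have hquad : x * (1 - x) ≤ 1 / 4 := by nlinarith [sq_nonneg (x - 1 / 2)]
    have hpow : 0 ≤ (x - α) ^ (2 * k) := (even_two_mul k).pow_nonneg _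
    calc _ = ((1 - 2 * x) * (x - α) + x * (1 - x) * (2 * k + 1)) * (x - α) ^ (2 * k) := by ring
      _ ≤ (1 / 4 + 1 / 4 * (2 * k + 1)) * (x - α) ^ (2 * k) := by gcongr
      _ = (k + 1) / 2 * (x - α) ^ (2 * k) := by ring
  calc N * c * ∫ x in (0 : ℝ)..1, (x - α) ^ (2 * (k + 1)) * laplaceWeight N α f x
      = N * ∫ x in (0 : ℝ)..1, c * (x - α) ^ (2 * (k + 1)) * laplaceWeight N α f x := by
        simp only [mul_assoc, intervalIntegral.integral_const_mul]
    _ ≤ N * ∫ x in (0 : ℝ)..1,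
          (x - α) * hessianRatio f x * (x - α) ^ (2 * k + 1) * laplaceWeight N α f x :=
        mul_le_mul_of_nonneg_left (integral_mul_laplaceWeight_mono hN hα hf1
          (by fun_prop) (by fun_prop) hlower) hN
    _ ≤ ∫ x in (0 : ℝ)..1, (k + 1) / 2 * (x - α) ^ (2 * k) * laplaceWeight N α f x := by
        rw [← hstein]
        exact integral_mul_laplaceWeight_mono hN hα hf1 (by fun_prop) (by fun_prop) hupper
    _ = (k + 1) / 2 * ∫ x in (0 : ℝ)..1, (x - α) ^ (2 * k) * laplaceWeight N α f x := by
        simp only [mul_assoc, intervalIntegral.integral_const_mul]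

lemma integral_sq_mul_laplaceWeight_le (hN : 0 < N) (hc0 : 0 < c) (hα : α ∈ Icc (0 : ℝ) 1)
    (hf : ContDiff ℝ 2 f) (hc : ∀ x ∈ Icc (0 : ℝ) 1, c ≤ hessianRatio f x) :
    ∫ x in (0 : ℝ)..1, (x - α) ^ 2 * laplaceWeight N α f x ≤
      (√(N * c))⁻¹ ^ 2 * ∫ x in (0 : ℝ)..1, laplaceWeight N α f x := by
  have hZ := integral_laplaceWeight_pos hN.le hα (hf.of_le (by norm_num))
  have hstep := mul_integral_even_pow_succ_mul_laplaceWeight_le hN.le hα hf hc 0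
  norm_num at hstep
  rw [inv_pow, Real.sq_sqrt (by positivity), ← div_eq_inv_mul, le_div_iff₀' (by positivity)]
  linarith

lemma integral_pow_four_mul_laplaceWeight_le (hN : 0 < N) (hc0 : 0 < c)
    (hα : α ∈ Icc (0 : ℝ) 1) (hf : ContDiff ℝ 2 f)
    (hc : ∀ x ∈ Icc (0 : ℝ) 1, c ≤ hessianRatio f x) :
    ∫ x in (0 : ℝ)..1, (x - α) ^ 4 * laplaceWeight N α f x ≤
      (√(N * c))⁻¹ ^ 2 * ∫ x in (0 : ℝ)..1, (x - α) ^ 2 * laplaceWeight N α f x := by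
  have hstep := mul_integral_even_pow_succ_mul_laplaceWeight_le hN.le hα hf hc 1
  norm_num at hstep
  rwa [inv_pow, Real.sq_sqrt (by positivity), ← div_eq_inv_mul, le_div_iff₀' (by positivity)]

lemma integral_abs_mul_laplaceWeight_le (hN : 0 < N) (hc0 : 0 < c) (hα : α ∈ Icc (0 : ℝ) 1)
    (hf : ContDiff ℝ 2 f) (hc : ∀ x ∈ Icc (0 : ℝ) 1, c ≤ hessianRatio f x) :
    ∫ x in (0 : ℝ)..1, |x - α| * laplaceWeight N α f x ≤
      (√(N * c))⁻¹ * ∫ x in (0 : ℝ)..1, laplaceWeight N α f x :=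
  integral_abs_mul_le_of_integral_sq_mul_le zero_le_one (by positivity) (by fun_prop)
    (continuous_laplaceWeight hN.le hα (hf.of_le (by norm_num))).continuousOn
    (fun _ hx => laplaceWeight_nonneg N α f hx)
    (integral_sq_mul_laplaceWeight_le hN hc0 hα hf hc)

lemma integral_abs_pow_three_mul_laplaceWeight_le (hN : 0 < N) (hc0 : 0 < c)
    (hα : α ∈ Icc (0 : ℝ) 1) (hf : ContDiff ℝ 2 f)
    (hc : ∀ x ∈ Icc (0 : ℝ) 1, c ≤ hessianRatio f x) :
    ∫ x in (0 : ℝ)..1, |x - α| ^ 3 * laplaceWeight N α f x ≤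
      (√(N * c))⁻¹ ^ 3 * ∫ x in (0 : ℝ)..1, laplaceWeight N α f x := by
  have hρ := (continuous_laplaceWeight hN.le hα (hf.of_le (by norm_num))).continuousOn
    (s := Icc 0 1)
  have hthird := integral_abs_mul_le_of_integral_sq_mul_le (h := fun x => x - α)
    (p := fun x => (x - α) ^ 2 * laplaceWeight N α f x) (r := (√(N * c))⁻¹)
    zero_le_one (by positivity) (by fun_prop) (by fun_prop)
    (fun _ hx => mul_nonneg (sq_nonneg _) (laplaceWeight_nonneg N α f hx))
    (by simpa only [← mul_assoc, ← pow_add] using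
      integral_pow_four_mul_laplaceWeight_le hN hc0 hα hf hc)
  calc ∫ x in (0 : ℝ)..1, |x - α| ^ 3 * laplaceWeight N α f x
      = ∫ x in (0 : ℝ)..1, |x - α| * ((x - α) ^ 2 * laplaceWeight N α f x) := by
        simp only [← sq_abs (_ - α), ← mul_assoc, ← pow_succ']
    _ ≤ (√(N * c))⁻¹ * ∫ x in (0 : ℝ)..1, (x - α) ^ 2 * laplaceWeight N α f x := hthird
    _ ≤ (√(N * c))⁻¹ * ((√(N * c))⁻¹ ^ 2 * ∫ x in (0 : ℝ)..1, laplaceWeight N α f x) := by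
        gcongr
        exact integral_sq_mul_laplaceWeight_le hN hc0 hα hf hc
    _ = (√(N * c))⁻¹ ^ 3 * ∫ x in (0 : ℝ)..1, laplaceWeight N α f x := by ring

end Moments

section LaplaceExpansion

variable {c B L N α : ℝ} {f g u u' : ℝ → ℝ}

lemma mul_integral_sq_mul_hessianRatio_mul_laplaceWeight (hN : 0 ≤ N) (hα : α ∈ Icc (0 : ℝ) 1)
    (hf : ContDiff ℝ 2 f) (hu : ∀ x ∈ Icc (0 : ℝ) 1, HasDerivAt u (u' x) x)
    (hu' : ContinuousOn u' (Icc 0 1)) :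
    N * ∫ x in (0 : ℝ)..1, (x - α) ^ 2 * hessianRatio f x * u x * laplaceWeight N α f x =
      ∫ x in (0 : ℝ)..1, (x * (1 - x) * u x +
        (x - α) * ((1 - 2 * x) * u x + x * (1 - x) * u' x)) * laplaceWeight N α f x := by
  have huc : ContinuousOn u (Icc 0 1) := fun x hx => (hu x hx).continuousAt.continuousWithinAt
  have hstein := integral_deriv_mul_laplaceWeight hN hα hf (y := fun x => (x - α) * u x)
    (y' := fun x => u x + (x - α) * u' x)
    (fun x hx => (((hasDerivAt_id x).sub_const α).mul (hu x hx)).congr_deriv (by simp))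
    (by fun_prop)
  calc _ = N * ∫ x in (0 : ℝ)..1,
        (x - α) * hessianRatio f x * ((x - α) * u x) * laplaceWeight N α f x := by
        congr! 4; ring
    _ = _ := by rw [← hstein]; congr! 3; ring

lemma abs_mul_one_sub_mul_sub_le (hu : ∀ x ∈ Icc (0 : ℝ) 1, HasDerivAt u (u' x) x)
    (hL : ∀ x ∈ Icc (0 : ℝ) 1, |u x| + |u' x| ≤ L) (hα : α ∈ Icc (0 : ℝ) 1) {x : ℝ}
    (hx : x ∈ Icc (0 : ℝ) 1) :
    |x * (1 - x) * u x - α * (1 - α) * u α| ≤ L * |x - α| := by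
  have hderiv : ∀ y ∈ Icc (0 : ℝ) 1, HasDerivWithinAt (fun y => y * (1 - y) * u y)
      ((1 - 2 * y) * u y + y * (1 - y) * u' y) (Icc 0 1) y := fun y hy =>
    ((((hasDerivAt_id y).mul ((hasDerivAt_id y).const_sub 1)).mul
      (hu y hy)).hasDerivWithinAt).congr_deriv (by simp only [Pi.mul_apply, id]; ring)
  exact (convex_Icc (0 : ℝ) 1).norm_image_sub_le_of_norm_hasDerivWithin_le hderiv
    (fun y hy => (abs_deriv_mul_one_sub_mul_le hy _ _).trans (hL y hy)) hα hx

lemma abs_mul_integral_sq_mul_hessianRatio_sub_le (hN : 0 < N) (hc0 : 0 < c)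
    (hα : α ∈ Icc (0 : ℝ) 1) (hf : ContDiff ℝ 2 f)
    (hc : ∀ x ∈ Icc (0 : ℝ) 1, c ≤ hessianRatio f x)
    (hu : ∀ x ∈ Icc (0 : ℝ) 1, HasDerivAt u (u' x) x) (hu' : ContinuousOn u' (Icc 0 1))
    (hL : ∀ x ∈ Icc (0 : ℝ) 1, |u x| + |u' x| ≤ L) :
    |N * (∫ x in (0 : ℝ)..1, (x - α) ^ 2 * hessianRatio f x * u x * laplaceWeight N α f x) -
        α * (1 - α) * u α * ∫ x in (0 : ℝ)..1, laplaceWeight N α f x| ≤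
      2 * L * ((√(N * c))⁻¹ * ∫ x in (0 : ℝ)..1, laplaceWeight N α f x) := by
  have hf1 : ContDiff ℝ 1 f := hf.of_le (by norm_num)
  have huc : ContinuousOn u (Icc 0 1) := fun x hx => (hu x hx).continuousAt.continuousWithinAt
  have hL0 : 0 ≤ L := (by positivity : 0 ≤ |u α| + |u' α|).trans (hL α hα)
  have hpointwise : ∀ x ∈ Icc (0 : ℝ) 1,
      |x * (1 - x) * u x + (x - α) * ((1 - 2 * x) * u x + x * (1 - x) * u' x) -
        α * (1 - α) * u α| ≤ 2 * L * |x - α| := by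
    intro x hx
    have hderiv := (abs_deriv_mul_one_sub_mul_le hx (u x) (u' x)).trans (hL x hx)
    calc _ = |(x * (1 - x) * u x - α * (1 - α) * u α) +
          (x - α) * ((1 - 2 * x) * u x + x * (1 - x) * u' x)| := by congr 1; ring
      _ ≤ |x * (1 - x) * u x - α * (1 - α) * u α| +
          |x - α| * |(1 - 2 * x) * u x + x * (1 - x) * u' x| := by
          rw [← abs_mul]; exact abs_add_le _ _
      _ ≤ L * |x - α| + |x - α| * L := by
          gcongr
          exact abs_mul_one_sub_mul_sub_le hu hL hα hx
      _ = 2 * L * |x - α| := by ring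
  rw [mul_integral_sq_mul_hessianRatio_mul_laplaceWeight hN.le hα hf hu hu',
    ← intervalIntegral.integral_const_mul, ← intervalIntegral.integral_sub
      (intervalIntegrable_mul_laplaceWeight hN.le hα hf1 (by fun_prop))
      (intervalIntegrable_mul_laplaceWeight hN.le hα hf1 continuousOn_const)]
  simp only [← sub_mul]
  calc _ ≤ ∫ x in (0 : ℝ)..1, 2 * L * |x - α| * laplaceWeight N α f x :=
        abs_integral_mul_laplaceWeight_le hN.le hα hf1 (by fun_prop) hpointwise
    _ = 2 * L * ∫ x in (0 : ℝ)..1, |x - α| * laplaceWeight N α f x := by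
        simp only [mul_assoc, intervalIntegral.integral_const_mul]
    _ ≤ _ := by
        gcongr
        exact integral_abs_mul_laplaceWeight_le hN hc0 hα hf hc

lemma HasDerivBounds.abs_mul_integral_phase_sub_le (hg : HasDerivBounds B g) (hN : 0 < N)
    (hc0 : 0 < c) (hα : α ∈ Icc (0 : ℝ) 1) (hf : ContDiff ℝ 2 f)
    (hc : ∀ x ∈ Icc (0 : ℝ) 1, c ≤ hessianRatio f x) :
    |N * (∫ x in (0 : ℝ)..1, Phase g α x * laplaceWeight N α f x) -
        N * ∫ x in (0 : ℝ)..1, (x - α) ^ 2 * iteratedDeriv 2 g x / 2 * laplaceWeight N α f x| ≤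
      B / (2 * c) * ((√(N * c))⁻¹ * ∫ x in (0 : ℝ)..1, laplaceWeight N α f x) := by
  have hf1 : ContDiff ℝ 1 f := hf.of_le (by norm_num)
  have hB : 0 ≤ B := (abs_nonneg _).trans (hg.abs_iteratedDeriv_two_le α hα)
  have hphase := continuous_phase (hg.contDiff.of_le (by norm_num)) α
  have hg2 := hg.contDiff.continuous_iteratedDeriv 2 (by norm_num)
  have hscale : N * (√(N * c))⁻¹ ^ 2 = c⁻¹ := by
    rw [inv_pow, Real.sq_sqrt (by positivity)]
    field_simp
  rw [← mul_sub, ← intervalIntegral.integral_sub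
    (intervalIntegrable_mul_laplaceWeight hN.le hα hf1 hphase.continuousOn)
    (intervalIntegrable_mul_laplaceWeight hN.le hα hf1 (by fun_prop)), abs_mul, abs_of_pos hN]
  simp only [← sub_mul]
  calc _ ≤ N * ∫ x in (0 : ℝ)..1, B / 2 * |x - α| ^ 3 * laplaceWeight N α f x :=
        mul_le_mul_of_nonneg_left (abs_integral_mul_laplaceWeight_le hN.le hα hf1 (by fun_prop)
          fun _ hx => hg.abs_phase_sub_le hα hx) hN.le
    _ = N * (B / 2 * ∫ x in (0 : ℝ)..1, |x - α| ^ 3 * laplaceWeight N α f x) := by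
        simp only [mul_assoc, intervalIntegral.integral_const_mul]
    _ ≤ N * (B / 2 * ((√(N * c))⁻¹ ^ 3 * ∫ x in (0 : ℝ)..1, laplaceWeight N α f x)) := by
        gcongr
        exact integral_abs_pow_three_mul_laplaceWeight_le hN hc0 hα hf hc
    _ = N * (√(N * c))⁻¹ ^ 2 *
          (B / 2 * ((√(N * c))⁻¹ * ∫ x in (0 : ℝ)..1, laplaceWeight N α f x)) := by ring
    _ = _ := by rw [hscale]; field_simp

lemma IsAdmissible.hasDerivAt_div_hessianRatio (hf : IsAdmissible c B f) (hc0 : 0 < c)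
    (hg : HasDerivBounds B g) {x : ℝ} (hx : x ∈ Icc (0 : ℝ) 1) :
    HasDerivAt (fun x => iteratedDeriv 2 g x / (2 * hessianRatio f x))
      ((iteratedDeriv 3 g x * hessianRatio f x - iteratedDeriv 2 g x *
        ((1 - 2 * x) * iteratedDeriv 2 f x + x * (1 - x) * iteratedDeriv 3 f x)) /
        (2 * hessianRatio f x ^ 2)) x := by
  have hr := (hc0.trans_le (hf.le_hessianRatio x hx)).ne'
  refine ((hg.hasDerivAt_iteratedDeriv_two x).div ((hf.hasDerivAt_hessianRatio x).const_mul 2)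
    (mul_ne_zero two_ne_zero hr)).congr_deriv ?_
  field_simp

lemma IsAdmissible.abs_div_hessianRatio_add_abs_deriv_le (hf : IsAdmissible c B f) (hc0 : 0 < c)
    (hg : HasDerivBounds B g) {x : ℝ} (hx : x ∈ Icc (0 : ℝ) 1) :
    |iteratedDeriv 2 g x / (2 * hessianRatio f x)| +
      |(iteratedDeriv 3 g x * hessianRatio f x - iteratedDeriv 2 g x *
        ((1 - 2 * x) * iteratedDeriv 2 f x + x * (1 - x) * iteratedDeriv 3 f x)) /
        (2 * hessianRatio f x ^ 2)| ≤ B / c + B ^ 2 / c ^ 2 := by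
  have hg2 := hg.abs_iteratedDeriv_two_le x hx
  have hg3 := hg.abs_iteratedDeriv_three_le x hx
  have hB : 0 ≤ B := (abs_nonneg _).trans hg2
  have hle := hf.le_hessianRatio x hx
  have hr := hc0.trans_le hle
  have hr' : |(1 - 2 * x) * iteratedDeriv 2 f x + x * (1 - x) * iteratedDeriv 3 f x| ≤ 2 * B := by
    linarith [abs_deriv_mul_one_sub_mul_le hx (iteratedDeriv 2 f x) (iteratedDeriv 3 f x),
      hf.abs_iteratedDeriv_two_le x hx, hf.abs_iteratedDeriv_three_le x hx]
  generalize (1 - 2 * x) * iteratedDeriv 2 f x + x * (1 - x) * iteratedDeriv 3 f x = r' at hr' ⊢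
  generalize iteratedDeriv 2 g x = a at hg2 ⊢
  generalize iteratedDeriv 3 g x = b at hg3 ⊢
  generalize hessianRatio f x = r at hle hr ⊢
  have hvalue : |a / (2 * r)| ≤ B / (2 * c) := by
    rw [abs_div, abs_of_pos (by positivity : 0 < 2 * r)]
    gcongr
  have hderiv : |(b * r - a * r') / (2 * r ^ 2)| ≤ B / (2 * c) + B * (2 * B) / (2 * c ^ 2) := by
    calc |(b * r - a * r') / (2 * r ^ 2)| = |b / (2 * r) - a * r' / (2 * r ^ 2)| := by
          congr 1; field_simp
      _ ≤ |b / (2 * r)| + |a * r' / (2 * r ^ 2)| := abs_sub _ _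
      _ = |b| / (2 * r) + |a| * |r'| / (2 * r ^ 2) := by
          rw [abs_div, abs_div, abs_mul a, abs_of_pos (by positivity : 0 < 2 * r),
            abs_of_pos (by positivity : 0 < 2 * r ^ 2)]
      _ ≤ _ := by gcongr
  calc _ ≤ B / (2 * c) + (B / (2 * c) + B * (2 * B) / (2 * c ^ 2)) := add_le_add hvalue hderiv
    _ = B / c + B ^ 2 / c ^ 2 := by field_simp; ring

/-- The constant in the first-order Laplace expansion of the mean of a phase: its error is at most
`laplaceConst c B / √N`, uniformly over `IsAdmissible c B`. -/
noncomputable def laplaceConst (c B : ℝ) : ℝ :=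
  (B / (2 * c) + 2 * (B / c + B ^ 2 / c ^ 2)) / √c

theorem IsAdmissible.abs_mul_integral_phase_sub_le (hf : IsAdmissible c B f) (hc0 : 0 < c)
    (hN : 0 < N) (hα : α ∈ Icc (0 : ℝ) 1) (hg : HasDerivBounds B g) :
    |N * (∫ x in (0 : ℝ)..1, Phase g α x * laplaceWeight N α f x) -
        α * (1 - α) * (iteratedDeriv 2 g α / (2 * hessianRatio f α)) *
          ∫ x in (0 : ℝ)..1, laplaceWeight N α f x| ≤
      laplaceConst c B / √N * ∫ x in (0 : ℝ)..1, laplaceWeight N α f x := by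
  have hf2 := hf.contDiff_two
  have hrpos : ∀ x ∈ Icc (0 : ℝ) 1, 0 < hessianRatio f x := fun x hx =>
    hc0.trans_le (hf.le_hessianRatio x hx)
  have hderiv_cont : ContinuousOn (fun x => (iteratedDeriv 3 g x * hessianRatio f x -
      iteratedDeriv 2 g x * ((1 - 2 * x) * iteratedDeriv 2 f x +
        x * (1 - x) * iteratedDeriv 3 f x)) / (2 * hessianRatio f x ^ 2)) (Icc 0 1) := by
    have := continuous_hessianRatio hf2
    have := hf.contDiff.continuous_iteratedDeriv 2 (by norm_num)
    have := hf.contDiff.continuous_iteratedDeriv 3 (by norm_num)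
    have := hg.contDiff.continuous_iteratedDeriv 2 (by norm_num)
    have := hg.contDiff.continuous_iteratedDeriv 3 (by norm_num)
    refine ContinuousOn.div (by fun_prop) (by fun_prop) fun x hx => ?_
    have := hrpos x hx
    positivity
  have hcubic := hg.abs_mul_integral_phase_sub_le hN hc0 hα hf2 hf.le_hessianRatio
  have hquad := abs_mul_integral_sq_mul_hessianRatio_sub_le hN hc0 hα hf2 hf.le_hessianRatio
    (fun x hx => hf.hasDerivAt_div_hessianRatio hc0 hg hx) hderiv_cont
    (fun x hx => hf.abs_div_hessianRatio_add_abs_deriv_le hc0 hg hx)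
  have hcancel : ∫ x in (0 : ℝ)..1, (x - α) ^ 2 * hessianRatio f x *
        (iteratedDeriv 2 g x / (2 * hessianRatio f x)) * laplaceWeight N α f x =
      ∫ x in (0 : ℝ)..1, (x - α) ^ 2 * iteratedDeriv 2 g x / 2 * laplaceWeight N α f x := by
    refine intervalIntegral.integral_congr fun x hx => ?_
    rw [uIcc_of_le zero_le_one] at hx
    have := hrpos x hx
    field_simp
  rw [hcancel] at hquad
  refine ((abs_sub_le _ _ _).trans (add_le_add hcubic hquad)).trans_eq ?_
  rw [laplaceConst, Real.sqrt_mul hN.le]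
  field_simp

lemma IsAdmissible.abs_mul_integral_phase_div_sub_le (hf : IsAdmissible c B f) (hc0 : 0 < c)
    (hN : 0 < N) (hα : α ∈ Icc (0 : ℝ) 1) (hg : HasDerivBounds B g) :
    |N * (∫ x in (0 : ℝ)..1, Phase g α x * laplaceWeight N α f x) /
          (∫ x in (0 : ℝ)..1, laplaceWeight N α f x) -
        α * (1 - α) * (iteratedDeriv 2 g α / (2 * hessianRatio f α))| ≤
      laplaceConst c B / √N := by
  have hZ := integral_laplaceWeight_pos hN.le hα (hf.contDiff.of_le (by norm_num))
  rw [div_sub' hZ.ne', abs_div, abs_of_pos hZ, div_le_iff₀ hZ, mul_comm (∫ _ in _.._, _)]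
  exact hf.abs_mul_integral_phase_sub_le hc0 hN hα hg

end LaplaceExpansion

section LogPartition

variable {c B N α : ℝ} {f : ℝ → ℝ}

lemma hasDerivAt_log_integral_laplaceWeight_smul (hN : 0 ≤ N) (hα : α ∈ Icc (0 : ℝ) 1)
    (hf : ContDiff ℝ 1 f) (s : ℝ) :
    HasDerivAt (fun s : ℝ => Real.log (∫ x in (0 : ℝ)..1, laplaceWeight N α (s • f) x))
      (-(N * ∫ x in (0 : ℝ)..1, Phase f α x * laplaceWeight N α (s • f) x) /
        ∫ x in (0 : ℝ)..1, laplaceWeight N α (s • f) x) s := by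
  have hZ := integral_laplaceWeight_pos hN hα (hf.const_smul s)
  have hphase := continuous_phase hf α
  have hderiv := hasDerivAt_integral_mul_exp
    (continuous_laplaceWeight hN hα (contDiff_const (c := (0 : ℝ))))
    (h := fun x => -N * Phase f α x) (by fun_prop) 0 1 s
  change HasDerivAt (fun s => ∫ x in (0 : ℝ)..1,
    laplaceWeight N α 0 x * Real.exp (s * (-N * Phase f α x))) (∫ x in (0 : ℝ)..1,
      -N * Phase f α x * (laplaceWeight N α 0 x * Real.exp (s * (-N * Phase f α x)))) s at hderiv
  simp only [← laplaceWeight_smul, mul_assoc, intervalIntegral.integral_const_mul] at hderiv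
  simpa only [neg_mul] using hderiv.log hZ.ne'

lemma hasDerivAt_log_hessianRatio_smul {s : ℝ} (hs : hessianRatio (s • f) α ≠ 0) :
    HasDerivAt (fun s : ℝ => Real.log (hessianRatio (s • f) α))
      (α * (1 - α) * iteratedDeriv 2 f α / hessianRatio (s • f) α) s := by
  simp only [hessianRatio_smul] at hs ⊢
  exact ((hasDerivAt_mul_const _).const_add 1).log hs

theorem IsAdmissible.abs_log_integral_laplaceWeight_sub_le (hf : IsAdmissible c B f)
    (hc0 : 0 < c) (hc1 : c ≤ 1) (hN : 0 < N) (hα : α ∈ Icc (0 : ℝ) 1) :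
    |Real.log (∫ x in (0 : ℝ)..1, laplaceWeight N α f x) + Real.log (hessianRatio f α) / 2 -
        Real.log (∫ x in (0 : ℝ)..1, laplaceWeight N α 0 x)| ≤ laplaceConst c B / √N := by
  have hf1 : ContDiff ℝ 1 f := hf.contDiff.of_le (by norm_num)
  have hderiv : ∀ s ∈ Icc (0 : ℝ) 1, HasDerivWithinAt
      (fun s : ℝ => Real.log (∫ x in (0 : ℝ)..1, laplaceWeight N α (s • f) x) +
        Real.log (hessianRatio (s • f) α) / 2)
      (-(N * ∫ x in (0 : ℝ)..1, Phase f α x * laplaceWeight N α (s • f) x) /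
          (∫ x in (0 : ℝ)..1, laplaceWeight N α (s • f) x) +
        α * (1 - α) * iteratedDeriv 2 f α / hessianRatio (s • f) α / 2) (Icc 0 1) s := fun s hs =>
    ((hasDerivAt_log_integral_laplaceWeight_smul hN.le hα hf1 s).add
      ((hasDerivAt_log_hessianRatio_smul
        (hc0.trans_le ((hf.smul hc1 hs).le_hessianRatio α hα)).ne').div_const 2)).hasDerivWithinAt
  have hbound : ∀ s ∈ Icc (0 : ℝ) 1,
      ‖-(N * ∫ x in (0 : ℝ)..1, Phase f α x * laplaceWeight N α (s • f) x) /
          (∫ x in (0 : ℝ)..1, laplaceWeight N α (s • f) x) +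
        α * (1 - α) * iteratedDeriv 2 f α / hessianRatio (s • f) α / 2‖ ≤
      laplaceConst c B / √N := by
    intro s hs
    have hmean := (hf.smul hc1 hs).abs_mul_integral_phase_div_sub_le hc0 hN hα hf.toHasDerivBounds
    rw [← norm_neg, Real.norm_eq_abs]
    convert hmean using 2
    ring
  have hmvt := (convex_Icc (0 : ℝ) 1).norm_image_sub_le_of_norm_hasDerivWithin_le hderiv hbound
    (left_mem_Icc.2 zero_le_one) (right_mem_Icc.2 zero_le_one)
  simpa [hessianRatio] using hmvt

theorem IsAdmissible.abs_integral_laplaceWeight_div_sub_le (hf : IsAdmissible c B f)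
    (hc0 : 0 < c) (hc1 : c ≤ 1) (hN : 1 ≤ N) (hα : α ∈ Icc (0 : ℝ) 1) :
    |(∫ x in (0 : ℝ)..1, laplaceWeight N α f x) / (∫ x in (0 : ℝ)..1, laplaceWeight N α 0 x) -
        (1 / hessianRatio f α) ^ ((1 : ℝ) / 2)| ≤
      (1 / c) ^ ((1 : ℝ) / 2) * (laplaceConst c B * Real.exp (laplaceConst c B)) *
        N ^ (-(1 : ℝ) / 2) := by
  have hN0 : 0 < N := one_pos.trans_le hN
  have hr : 0 < hessianRatio f α := hc0.trans_le (hf.le_hessianRatio α hα)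
  have hZ := integral_laplaceWeight_pos hN0.le hα (hf.contDiff.of_le (by norm_num))
  have hZ0 := integral_laplaceWeight_pos hN0.le hα (f := 0) contDiff_const
  have hlog := hf.abs_log_integral_laplaceWeight_sub_le hc0 hc1 hN0 hα
  have hlog' : |Real.log ((∫ x in (0 : ℝ)..1, laplaceWeight N α f x) /
        (∫ x in (0 : ℝ)..1, laplaceWeight N α 0 x)) -
      Real.log ((1 / hessianRatio f α) ^ ((1 : ℝ) / 2))| ≤ laplaceConst c B / √N := by
    rw [Real.log_div hZ.ne' hZ0.ne', Real.log_rpow (one_div_pos.2 hr),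
      one_div (hessianRatio f α), Real.log_inv]
    convert hlog using 2
    ring
  have hK : 0 ≤ laplaceConst c B / √N := (abs_nonneg _).trans hlog
  have hK0 : 0 ≤ laplaceConst c B := by
    simpa using (le_div_iff₀ (Real.sqrt_pos.2 hN0)).1 hK
  have hKle : laplaceConst c B / √N ≤ laplaceConst c B :=
    div_le_self hK0 (Real.one_le_sqrt.2 hN)
  have hrpow : N ^ (-(1 : ℝ) / 2) = (√N)⁻¹ := by
    rw [neg_div, Real.rpow_neg hN0.le, Real.sqrt_eq_rpow]
  calc _ ≤ (1 / hessianRatio f α) ^ ((1 : ℝ) / 2) *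
        (laplaceConst c B / √N * Real.exp (laplaceConst c B / √N)) :=
        abs_sub_le_mul_exp_of_abs_log_sub_log_le (div_pos hZ hZ0) (by positivity) hlog'
    _ ≤ (1 / c) ^ ((1 : ℝ) / 2) * (laplaceConst c B / √N * Real.exp (laplaceConst c B)) := by
        gcongr
        exact hf.le_hessianRatio α hα
    _ = _ := by rw [hrpow]; ring

end LogPartition

section Entropy

variable {x : ℝ} {f : ℝ → ℝ}

lemma hasDerivAt_GP (hx : x ∈ Ioo (0 : ℝ) 1) :
    HasDerivAt GP (Real.log x - Real.log (1 - x)) x := by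
  have hleft := Real.hasDerivAt_mul_log hx.1.ne'
  have hright : HasDerivAt (fun x : ℝ => (1 - x) * Real.log (1 - x)) _ x :=
    (Real.hasDerivAt_mul_log (sub_pos.2 hx.2).ne').comp x ((hasDerivAt_id x).const_sub 1)
  exact (hleft.add hright).congr_deriv (by ring)

lemma iteratedDeriv_two_GP_add (hf : ContDiff ℝ 2 f) (hx : x ∈ Ioo (0 : ℝ) 1) :
    iteratedDeriv 2 (GP + f) x = hessianRatio f x / (x * (1 - x)) := by
  have hx0 : x ≠ 0 := hx.1.ne'
  have hx1 : 1 - x ≠ 0 := (sub_pos.2 hx.2).ne'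
  have hderiv : deriv (GP + f) =ᶠ[nhds x] fun y => Real.log y - Real.log (1 - y) + deriv f y := by
    filter_upwards [isOpen_Ioo.mem_nhds hx] with y hy
    exact ((hasDerivAt_GP hy).add (hf.differentiable (by norm_num) y).hasDerivAt).deriv
  have hf1 : HasDerivAt (deriv f) (iteratedDeriv 2 f x) x := by
    simpa using hasDerivAt_iteratedDeriv (n := 1) hf (by norm_num) x
  have hsecond : HasDerivAt (fun y => Real.log y - Real.log (1 - y) + deriv f y)
      (x⁻¹ - -1 / (1 - x) + iteratedDeriv 2 f x) x :=
    ((Real.hasDerivAt_log hx0).sub (((hasDerivAt_id x).const_sub 1).log hx1)).add hf1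
  rw [iteratedDeriv_succ, iteratedDeriv_one, hderiv.deriv_eq, hsecond.deriv, hessianRatio]
  field_simp
  ring

lemma iteratedDeriv_two_GP (hx : x ∈ Ioo (0 : ℝ) 1) :
    iteratedDeriv 2 GP x = 1 / (x * (1 - x)) := by
  simpa [hessianRatio] using iteratedDeriv_two_GP_add (f := 0) contDiff_const hx

lemma exp_neg_mul_phase_GP_add (N α : ℝ) (hf : DifferentiableAt ℝ f x) (hx : x ∈ Ioo (0 : ℝ) 1) :
    Real.exp (-N * Phase (GP + f) α x) = Real.exp (-N * GP α) * laplaceWeight N α f x := by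
  have hderiv : deriv (GP + f) x = Real.log x - Real.log (1 - x) + deriv f x :=
    ((hasDerivAt_GP hx).add hf.hasDerivAt).deriv
  rw [laplaceWeight, Real.rpow_def_of_pos hx.1, Real.rpow_def_of_pos (sub_pos.2 hx.2),
    ← Real.exp_add, ← Real.exp_add, ← Real.exp_add]
  simp only [Phase, hderiv, Pi.add_apply, GP]
  ring_nf

lemma Qnorm_GP_add (hf : Differentiable ℝ f) (N : ℕ) (α : ℝ) :
    Qnorm (GP + f) N α = 2 * Real.pi * Real.exp (-N * GP α) *
      ∫ x in (0 : ℝ)..1, laplaceWeight N α f x := by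
  rw [Qnorm, mul_assoc _ (Real.exp _), ← intervalIntegral.integral_const_mul (Real.exp _)]
  congr 1
  rw [intervalIntegral.integral_of_le zero_le_one, intervalIntegral.integral_of_le zero_le_one,
    integral_Ioc_eq_integral_Ioo, integral_Ioc_eq_integral_Ioo]
  exact setIntegral_congr_fun measurableSet_Ioo fun x hx => exp_neg_mul_phase_GP_add N α (hf x) hx

lemma Qnorm_GP_add_div_Qnorm_GP (hf : Differentiable ℝ f) (N : ℕ) (α : ℝ) :
    Qnorm (GP + f) N α / Qnorm GP N α = (∫ x in (0 : ℝ)..1, laplaceWeight N α f x) /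
      ∫ x in (0 : ℝ)..1, laplaceWeight N α 0 x := by
  have hzero := Qnorm_GP_add (f := 0) (differentiable_const 0) N α
  rw [add_zero] at hzero
  rw [Qnorm_GP_add hf, hzero, mul_div_mul_left _ _ (by positivity)]

end Entropy

section Interpolation

variable {f0 f1 : ℝ → ℝ} {t α : ℝ}

lemma Gt_eq_GP_add (f0 f1 : ℝ → ℝ) (t : ℝ) : Gt f0 f1 t = GP + ((1 - t) • f0 + t • f1) := rfl

lemma iteratedDeriv_two_GP_div_iteratedDeriv_two_Gt (hf0 : ContDiff ℝ 2 f0)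
    (hf1 : ContDiff ℝ 2 f1) (t : ℝ) (hα : α ∈ Ioo (0 : ℝ) 1) :
    iteratedDeriv 2 GP α / iteratedDeriv 2 (Gt f0 f1 t) α =
      1 / hessianRatio ((1 - t) • f0 + t • f1) α := by
  have hα0 : α * (1 - α) ≠ 0 := (mul_pos hα.1 (sub_pos.2 hα.2)).ne'
  have hft : ContDiff ℝ 2 ((1 - t) • f0 + t • f1) := (hf0.const_smul (1 - t)).add (hf1.const_smul t)
  rw [Gt_eq_GP_add, iteratedDeriv_two_GP_add hft hα,
    iteratedDeriv_two_GP hα, div_div_div_cancel_right₀ hα0]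

lemma Omg_of_mem_Ioo (f0 f1 : ℝ → ℝ) (t : ℝ) (hα : α ∈ Ioo (0 : ℝ) 1) :
    Omg f0 f1 t α =
      (iteratedDeriv 2 GP α / iteratedDeriv 2 (Gt f0 f1 t) α) ^ ((1 : ℝ) / 2) :=
  if_neg (by rintro (rfl | rfl) <;> simp at hα)

lemma Omg_eq_one_div_hessianRatio_rpow (hf0 : ContDiff ℝ 2 f0) (hf1 : ContDiff ℝ 2 f1) (t : ℝ)
    (hα : α ∈ Icc (0 : ℝ) 1) :
    Omg f0 f1 t α = (1 / hessianRatio ((1 - t) • f0 + t • f1) α) ^ ((1 : ℝ) / 2) := by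
  rcases eq_endpoints_or_mem_Ioo_of_mem_Icc hα with rfl | rfl | hα
  · simp [Omg, hessianRatio]
  · simp [Omg, hessianRatio]
  · rw [Omg_of_mem_Ioo f0 f1 t hα, iteratedDeriv_two_GP_div_iteratedDeriv_two_Gt hf0 hf1 t hα]

lemma exists_isAdmissible_of_iteratedDeriv_two_pos {f : ℝ → ℝ} (hf : ContDiff ℝ 3 f)
    (hG : ∀ x ∈ Ioo (0 : ℝ) 1, 0 < iteratedDeriv 2 (GP + f) x) :
    ∃ c > 0, ∃ B, IsAdmissible c B f := by
  refine exists_isAdmissible hf fun x hx => ?_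
  have hpos := hG x hx
  rw [iteratedDeriv_two_GP_add (hf.of_le (by norm_num)) hx] at hpos
  exact (div_pos_iff_of_pos_right (mul_pos hx.1 (sub_pos.2 hx.2))).1 hpos

lemma exists_forall_isAdmissible (hf0 : ContDiff ℝ 3 f0) (hf1 : ContDiff ℝ 3 f1)
    (hG0 : ∀ x ∈ Ioo (0 : ℝ) 1, 0 < iteratedDeriv 2 (Gt f0 f1 0) x)
    (hG1 : ∀ x ∈ Ioo (0 : ℝ) 1, 0 < iteratedDeriv 2 (Gt f0 f1 1) x) :
    ∃ c > 0, c ≤ 1 ∧ ∃ B, ∀ t ∈ Icc (0 : ℝ) 1, IsAdmissible c B ((1 - t) • f0 + t • f1) := by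
  obtain ⟨c₀, hc₀, B₀, h₀⟩ := exists_isAdmissible_of_iteratedDeriv_two_pos hf0
    (by simpa [Gt_eq_GP_add] using hG0)
  obtain ⟨c₁, hc₁, B₁, h₁⟩ := exists_isAdmissible_of_iteratedDeriv_two_pos hf1
    (by simpa [Gt_eq_GP_add] using hG1)
  refine ⟨min 1 (min c₀ c₁), by positivity, min_le_left _ _, max B₀ B₁, fun t ht => ?_⟩
  exact convex_setOf_isAdmissible _ _
    (h₀.mono ((min_le_right _ _).trans (min_le_left _ _)) (le_max_left _ _))
    (h₁.mono ((min_le_right _ _).trans (min_le_right _ _)) (le_max_right _ _))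
    (sub_nonneg.2 ht.2) ht.1 (sub_add_cancel 1 t)

lemma continuousOn_Omg (hf0 : ContDiff ℝ 2 f0) (hf1 : ContDiff ℝ 2 f1)
    (hpos : ∀ t ∈ Icc (0 : ℝ) 1, ∀ α ∈ Icc (0 : ℝ) 1,
      0 < hessianRatio ((1 - t) • f0 + t • f1) α) :
    ContinuousOn (fun p : ℝ × ℝ => Omg f0 f1 p.1 p.2) (Icc (0 : ℝ) 1 ×ˢ Icc (0 : ℝ) 1) := by
  have hcont : Continuous fun p : ℝ × ℝ => hessianRatio ((1 - p.1) • f0 + p.1 • f1) p.2 := by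
    simp only [hessianRatio_linearCombination hf0 hf1 (sub_add_cancel 1 _)]
    have := continuous_hessianRatio hf0
    have := continuous_hessianRatio hf1
    fun_prop
  refine ContinuousOn.congr (f := fun p : ℝ × ℝ =>
    (1 / hessianRatio ((1 - p.1) • f0 + p.1 • f1) p.2) ^ ((1 : ℝ) / 2)) ?_
    fun p hp => Omg_eq_one_div_hessianRatio_rpow hf0 hf1 p.1 hp.2
  exact (continuousOn_const.div hcont.continuousOn fun p hp => (hpos _ hp.1 _ hp.2).ne').rpow_const
    fun _ _ => Or.inr (by norm_num)

lemma exists_pos_forall_dist_lt_of_continuousOn_prod {X Y Z : Type*} [TopologicalSpace X]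
    [PseudoMetricSpace Y] [PseudoMetricSpace Z] {F : X × Y → Z} {K : Set X} {S : Set Y} {y₀ : Y}
    (hK : IsCompact K) (hF : ContinuousOn F (K ×ˢ S)) (hy₀ : y₀ ∈ S) {ε : ℝ} (hε : 0 < ε) :
    ∃ δ > 0, ∀ x ∈ K, ∀ y ∈ S, dist y y₀ < δ → dist (F (x, y)) (F (x, y₀)) < ε := by
  have hswap : ContinuousOn (Function.uncurry fun y x => F (x, y)) (S ×ˢ K) :=
    hF.comp continuous_swap.continuousOn fun _ hp => ⟨hp.2, hp.1⟩
  obtain ⟨v, hv, hvε⟩ := hK.mem_uniformity_of_prod hswap hy₀ (Metric.dist_mem_uniformity hε)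
  obtain ⟨δ, hδ, hδv⟩ := Metric.mem_nhdsWithin_iff.1 hv
  exact ⟨δ, hδ, fun x hx y hy hyδ => hvε y (hδv ⟨hyδ, hy⟩) x hx⟩

lemma exists_pos_forall_abs_Omg_sub_one_lt
    (hcont : ContinuousOn (fun p : ℝ × ℝ => Omg f0 f1 p.1 p.2)
      (Icc (0 : ℝ) 1 ×ˢ Icc (0 : ℝ) 1)) {ε : ℝ} (hε : 0 < ε) :
    ∃ δ > 0, ∀ t ∈ Icc (0 : ℝ) 1, ∀ α ∈ Icc (0 : ℝ) 1, (α < δ ∨ 1 - α < δ) →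
      |Omg f0 f1 t α - 1| < ε := by
  obtain ⟨δ₀, hδ₀, h₀⟩ := exists_pos_forall_dist_lt_of_continuousOn_prod isCompact_Icc hcont
    (left_mem_Icc.2 zero_le_one) hε
  obtain ⟨δ₁, hδ₁, h₁⟩ := exists_pos_forall_dist_lt_of_continuousOn_prod isCompact_Icc hcont
    (right_mem_Icc.2 zero_le_one) hε
  refine ⟨min δ₀ δ₁, lt_min hδ₀ hδ₁, fun t ht α hα hnear => ?_⟩
  rcases hnear with hleft | hright
  · have hdist : dist α 0 < δ₀ := by
      rw [Real.dist_0_eq_abs, abs_of_nonneg hα.1]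
      exact hleft.trans_le (min_le_left _ _)
    simpa [Omg, Real.dist_eq] using h₀ t ht α hα hdist
  · have hdist : dist α 1 < δ₁ := by
      rw [dist_comm, Real.dist_eq, abs_of_nonneg (sub_nonneg.2 hα.2)]
      exact hright.trans_le (min_le_right _ _)
    simpa [Omg, Real.dist_eq] using h₁ t ht α hα hdist

lemma IsAdmissible.abs_Qnorm_div_sub_Omg_le {c B : ℝ} (hf0 : ContDiff ℝ 2 f0)
    (hf1 : ContDiff ℝ 2 f1) (ht : IsAdmissible c B ((1 - t) • f0 + t • f1)) (hc0 : 0 < c)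
    (hc1 : c ≤ 1) {N : ℕ} (hN : 1 ≤ N) (hα : α ∈ Icc (0 : ℝ) 1) :
    |Qnorm (Gt f0 f1 t) N α / Qnorm GP N α - Omg f0 f1 t α| ≤
      (1 / c) ^ ((1 : ℝ) / 2) * (laplaceConst c B * Real.exp (laplaceConst c B)) *
        (N : ℝ) ^ (-(1 : ℝ) / 2) := by
  rw [Omg_eq_one_div_hessianRatio_rpow hf0 hf1 t hα, Gt_eq_GP_add,
    Qnorm_GP_add_div_Qnorm_GP (ht.contDiff.differentiable (by norm_num))]
  exact ht.abs_integral_laplaceWeight_div_sub_le hc0 hc1 (mod_cast hN) hα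

lemma exists_forall_mul_rpow_neg_lt (C : ℝ) {p ε : ℝ} (hp : 0 < p) (hε : 0 < ε) :
    ∃ N₀ : ℕ, ∀ N : ℕ, N₀ ≤ N → C * (N : ℝ) ^ (-p) < ε := by
  have hlim : Tendsto (fun N : ℕ => C * (N : ℝ) ^ (-p)) atTop (nhds (C * 0)) :=
    ((tendsto_rpow_neg_atTop hp).comp tendsto_natCast_atTop_atTop).const_mul C
  exact eventually_atTop.1 (hlim.eventually_lt_const (by simpa using hε))

end Interpolation

theorem bergman_cp1_uniform_convergence_of_q_to_Omega_general
    (f0 f1 : ℝ → ℝ) (hf0 : ContDiff ℝ 3 f0) (hf1 : ContDiff ℝ 3 f1)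
    (hG0 : ∀ x ∈ Ioo (0 : ℝ) 1, 0 < iteratedDeriv 2 (Gt f0 f1 0) x)
    (hG1 : ∀ x ∈ Ioo (0 : ℝ) 1, 0 < iteratedDeriv 2 (Gt f0 f1 1) x) :
    ContinuousOn (fun p : ℝ × ℝ => Omg f0 f1 p.1 p.2)
      (Icc (0 : ℝ) 1 ×ˢ Icc (0 : ℝ) 1) ∧
    (∀ ε : ℝ, 0 < ε → ∃ δ : ℝ, 0 < δ ∧
      ∀ t ∈ Icc (0 : ℝ) 1, ∀ α ∈ Ioo (0 : ℝ) 1, (α < δ ∨ 1 - α < δ) →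
        |(iteratedDeriv 2 GP α / iteratedDeriv 2 (Gt f0 f1 t) α) ^ ((1 : ℝ) / 2) - 1| < ε) ∧
    (∃ C : ℝ, 0 < C ∧
      ∀ N : ℕ, 1 ≤ N → ∀ t ∈ Icc (0 : ℝ) 1, ∀ α ∈ Icc (0 : ℝ) 1,
        |Qnorm (Gt f0 f1 t) N α / Qnorm GP N α - Omg f0 f1 t α| ≤ C * (N : ℝ) ^ (-(1 : ℝ) / 2)) ∧
    (∀ ε : ℝ, 0 < ε → ∃ N₀ : ℕ, ∀ N : ℕ, N₀ ≤ N →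
      ∀ t ∈ Icc (0 : ℝ) 1, ∀ α ∈ Icc (0 : ℝ) 1,
        |Qnorm (Gt f0 f1 t) N α / Qnorm GP N α - Omg f0 f1 t α| < ε) := by
  have hf0' : ContDiff ℝ 2 f0 := hf0.of_le (by norm_num)
  have hf1' : ContDiff ℝ 2 f1 := hf1.of_le (by norm_num)
  obtain ⟨c, hc0, hc1, B, hadm⟩ := exists_forall_isAdmissible hf0 hf1 hG0 hG1
  have hcont := continuousOn_Omg hf0' hf1' fun t ht α hα =>
    hc0.trans_le ((hadm t ht).le_hessianRatio α hα)
  obtain ⟨C, hC⟩ : ∃ C : ℝ, ∀ N : ℕ, 1 ≤ N → ∀ t ∈ Icc (0 : ℝ) 1, ∀ α ∈ Icc (0 : ℝ) 1,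
      |Qnorm (Gt f0 f1 t) N α / Qnorm GP N α - Omg f0 f1 t α| ≤ C * (N : ℝ) ^ (-(1 : ℝ) / 2) :=
    ⟨_, fun N hN t ht α hα => (hadm t ht).abs_Qnorm_div_sub_Omg_le hf0' hf1' hc0 hc1 hN hα⟩
  refine ⟨hcont, fun ε hε => ?_, ⟨max C 1, by positivity, fun N hN t ht α hα =>
    (hC N hN t ht α hα).trans (by gcongr; exact le_max_left _ _)⟩, fun ε hε => ?_⟩
  · obtain ⟨δ, hδ, hnear⟩ := exists_pos_forall_abs_Omg_sub_one_lt hcont hε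
    exact ⟨δ, hδ, fun t ht α hα hαδ => Omg_of_mem_Ioo f0 f1 t hα ▸
      hnear t ht α (Ioo_subset_Icc_self hα) hαδ⟩
  · obtain ⟨N₀, hN₀⟩ := exists_forall_mul_rpow_neg_lt C one_half_pos hε
    exact ⟨max 1 N₀, fun N hN t ht α hα => (hC N (le_of_max_le_left hN) t ht α hα).trans_lt
      (neg_div (2 : ℝ) 1 ▸ hN₀ N (le_of_max_le_right hN))⟩

theorem bergman_cp1_uniform_convergence_of_q_to_Omega
    (f0 f1 : ℝ → ℝ) (hf0 : ContDiff ℝ (⊤ : ℕ∞) f0) (hf1 : ContDiff ℝ (⊤ : ℕ∞) f1)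
    (hG0 : ∀ x ∈ Set.Ioo (0:ℝ) 1, 0 < iteratedDeriv 2 (Gt f0 f1 0) x)
    (hG1 : ∀ x ∈ Set.Ioo (0:ℝ) 1, 0 < iteratedDeriv 2 (Gt f0 f1 1) x) :
    ContinuousOn (fun p : ℝ × ℝ => Omg f0 f1 p.1 p.2)
      (Set.Icc (0:ℝ) 1 ×ˢ Set.Icc (0:ℝ) 1) ∧
    (∀ ε : ℝ, 0 < ε → ∃ δ : ℝ, 0 < δ ∧
      ∀ t ∈ Set.Icc (0:ℝ) 1, ∀ α ∈ Set.Ioo (0:ℝ) 1, (α < δ ∨ 1 - α < δ) →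
        |(iteratedDeriv 2 GP α / iteratedDeriv 2 (Gt f0 f1 t) α) ^ ((1:ℝ)/2) - 1| < ε) ∧
    (∃ C : ℝ, 0 < C ∧
      ∀ N : ℕ, 1 ≤ N → ∀ t ∈ Set.Icc (0:ℝ) 1, ∀ α ∈ Set.Icc (0:ℝ) 1,
        |Qnorm (Gt f0 f1 t) N α / Qnorm GP N α - Omg f0 f1 t α| ≤ C * (N:ℝ) ^ (-(1:ℝ)/4)) ∧
    (∀ ε : ℝ, 0 < ε → ∃ N₀ : ℕ, ∀ N : ℕ, N₀ ≤ N →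
      ∀ t ∈ Set.Icc (0:ℝ) 1, ∀ α ∈ Set.Icc (0:ℝ) 1,
        |Qnorm (Gt f0 f1 t) N α / Qnorm GP N α - Omg f0 f1 t α| < ε) := by
  obtain ⟨hcont, hboundary, ⟨C, hC, hrate⟩, hlim⟩ :=
    bergman_cp1_uniform_convergence_of_q_to_Omega_general f0 f1
      (mod_cast contDiff_infty.1 hf0 3) (mod_cast contDiff_infty.1 hf1 3) hG0 hG1
  exact ⟨hcont, hboundary, ⟨C, hC, fun N hN t ht α hα => (hrate N hN t ht α hα).trans
    (mul_le_mul_of_nonneg_left (Real.rpow_le_rpow_of_exponent_le (mod_cast hN) (by norm_num))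
      hC.le)⟩, hlim⟩
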